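/- arXiv:2203.00950 — 2 statements merged into one kernel-verified Lean document; each statement's English description precedes it below -/
import Mathlib

section
/- Let N ≥ 2, f : [0,T] × ℝ^N → ℝ^N continuous, V : ℝ^N → ℝ a C¹ function, p ∈ ℝ^N and c ∈ ℝ such that V(p) < c and the level set V^{-1}(c) is bounded and nonempty. Assume ⟨∇V(u), p − u⟩ < 0 for all u ∈ V^{-1}(c), and ⟨f(t,u), ∇V(u)⟩ ≤ 0 for all u ∈ V^{-1}(c) and t ∈ [0,T]. Then there exists a differentiable y : [0,T] → ℝ^N with y'(t) = f(t, y(t)) for all t ∈ [0,T], y(0) = y(T), and V(y(t)) ≤ c for all t ∈ [0,T]. -/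
open Set Metric
open scoped RealInnerProductSpace

section Aux
open MeasureTheory

abbrev EE (N : ℕ) := EuclideanSpace ℝ (Fin N)

lemma det_interp {N : ℕ} (ε : ℝ) (hε : 0 < ε) :
    ∃ (t w : Fin (N+1) → ℝ), (∀ i, 0 < t i ∧ t i < ε) ∧ (∑ i, w i = 1) ∧
      ∀ A : EE N →L[ℝ] EE N,
        (ContinuousLinearMap.id ℝ _ + A).det = ∑ i, w i * (ContinuousLinearMap.id ℝ _ + t i • A).det := by
  classical
  set t : Fin (N+1) → ℝ := fun i => ε * ((i:ℝ)+1) / (N+2) with ht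
  have hinj : Function.Injective t := by
    intro i j hij
    simp only [ht] at hij
    have h2 : (N:ℝ) + 2 ≠ 0 := by positivity
    field_simp at hij
    have : (i:ℝ) = j := by linarith
    exact Fin.ext (by exact_mod_cast this)
  refine ⟨t, fun i => (Lagrange.basis Finset.univ t i).eval 1, ?_, ?_, ?_⟩
  · intro i
    refine ⟨by positivity, ?_⟩
    simp only [ht]
    have h2 : (0:ℝ) < (N:ℝ) + 2 := by positivity
    rw [div_lt_iff₀ h2]
    have : ((i:ℕ):ℝ) < N + 1 := by exact_mod_cast i.2
    nlinarith
  · rw [← Polynomial.eval_finsetSum, Lagrange.sum_basis hinj.injOn Finset.univ_nonempty]; simp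
  · intro A
    set b := (EuclideanSpace.basisFun (Fin N) ℝ).toBasis
    set M := LinearMap.toMatrix b b (A : EE N →ₗ[ℝ] EE N) with hM
    set q : Polynomial ℝ := Matrix.det ((Polynomial.X : Polynomial ℝ) • M.map Polynomial.C + (1 : Matrix (Fin N) (Fin N) ℝ).map Polynomial.C) with hq
    have hev : ∀ s : ℝ, (ContinuousLinearMap.id ℝ _ + s • A).det = q.eval s := by
      intro s
      have e1 : (ContinuousLinearMap.id ℝ (EuclideanSpace ℝ (Fin N)) + s • A).det = (1 + s • M).det := by
        rw [ContinuousLinearMap.det, ← LinearMap.det_toMatrix b]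
        congr 1
        simp [hM]
      rw [e1, hq, ← Polynomial.coe_evalRingHom, RingHom.map_det]
      congr 1
      ext i j
      by_cases hij : i = j <;> simp [hij, add_comm, mul_comm s]
    have hdeg : q.degree < (Finset.univ : Finset (Fin (N+1))).card := by
      have := Polynomial.natDegree_det_X_add_C_le M 1
      rw [← hq] at this
      rw [Finset.card_univ, Fintype.card_fin]
      refine lt_of_le_of_lt (Polynomial.degree_le_natDegree) ?_
      have h3 : q.natDegree < N + 1 := by
        rw [Fintype.card_fin] at this
        omega
      exact_mod_cast h3
    have h1 := hev 1
    rw [one_smul] at h1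
    rw [h1]
    simp_rw [hev]
    conv_lhs => rw [Lagrange.eq_interpolate hinj.injOn hdeg]
    rw [Lagrange.interpolate_apply, Polynomial.eval_finsetSum]
    refine Finset.sum_congr rfl fun i _ => ?_
    simp [mul_comm]

lemma det_pos_aux {E : Type*} [NormedAddCommGroup E] [NormedSpace ℝ E] [FiniteDimensional ℝ E]
    (A : E →L[ℝ] E) (K t : ℝ) (hK : 0 ≤ K) (hA : ‖A‖ ≤ K) (ht : 0 < t) (htK : t * K < 1) :
    0 < (ContinuousLinearMap.id ℝ E + t • A).det := by
  have hne : ∀ s ∈ Icc (0:ℝ) t, (ContinuousLinearMap.id ℝ E + s • A).det ≠ 0 := by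
    intro s hs h0
    have hk := LinearMap.bot_lt_ker_of_det_eq_zero (f := (ContinuousLinearMap.id ℝ E + s • A : E →L[ℝ] E).toLinearMap) h0
    obtain ⟨x, hx, hx0⟩ := Submodule.exists_mem_ne_zero_of_ne_bot hk.ne'
    have hx1 : x + s • A x = 0 := by simpa using hx
    have hx2 : ‖x‖ ≤ s * K * ‖x‖ := by
      have : x = - (s • A x) := eq_neg_of_add_eq_zero_left hx1
      calc ‖x‖ = ‖s • A x‖ := by conv_lhs => rw [this, norm_neg]
        _ = s * ‖A x‖ := by rw [norm_smul, Real.norm_of_nonneg hs.1]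
        _ ≤ s * (K * ‖x‖) := by
            gcongr
            · exact hs.1
            · exact (A.le_opNorm x).trans (by gcongr)
        _ = _ := by ring
    have hxp : 0 < ‖x‖ := norm_pos_iff.2 hx0
    have : s * K ≤ t * K := by gcongr; exact hs.2
    nlinarith
  have hcont : ContinuousOn (fun s : ℝ => (ContinuousLinearMap.id ℝ E + s • A).det) (Icc 0 t) := by
    apply Continuous.continuousOn
    exact ContinuousLinearMap.continuous_det.comp (by fun_prop)
  by_contra hcon
  push Not at hcon
  have := intermediate_value_Icc' ht.le hcont
  have h1 : (ContinuousLinearMap.id ℝ E + (0:ℝ) • A).det = 1 := by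
    simp [ContinuousLinearMap.det]
  obtain ⟨s, hs, h0⟩ := this ⟨hcon, by simp only [h1]; norm_num⟩
  exact hne s hs h0

lemma no_retraction {N : ℕ} (S : ℝ) (hS : 0 < S)
    (H : EE N → EE N)
    (hH : ∀ x ∈ closedBall 0 S, ContDiffAt ℝ 1 H x)
    (hn : ∀ x ∈ closedBall 0 S, ‖H x‖ = S)
    (hid : ∀ x ∈ sphere 0 S, H x = x) : False := by
  obtain ⟨K, hK⟩ := ContDiffOn.exists_lipschitzOnWith (n := 1) (f := fun x => H x - x)
    (s := closedBall (0:(EE N)) S) (fun x hx => ((hH x hx).sub contDiffAt_id).contDiffWithinAt)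
    (by norm_num) (convex_closedBall _ _) (isCompact_closedBall _ _)
  classical
  set g : (EE N) → (EE N) := fun x => if ‖x‖ ≤ S then H x - x else 0 with hg
  have gin : ∀ x, ‖x‖ ≤ S → g x = H x - x := fun x hx => by simp [hg, hx]
  have gout : ∀ x, S ≤ ‖x‖ → g x = 0 := fun x hx => by
    rcases hx.eq_or_lt with h | h
    · rw [gin x h.symm.le, hid x (by simp [h]), sub_self]
    · simp [hg, h]
  -- mixed Lipschitz estimate
  have hin : ∀ x z, ‖x‖ ≤ S → ‖z‖ ≤ S → ‖g x - g z‖ ≤ K * ‖x - z‖ := by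
    intro x z hx hz
    rw [gin x hx, gin z hz]
    have := hK.dist_le_mul x (by simpa using hx) z (by simpa using hz)
    simpa [dist_eq_norm] using this
  have hmix : ∀ x z, ‖x‖ ≤ S → S < ‖z‖ → ‖g x - g z‖ ≤ 2 * K * ‖x - z‖ := by
    intro x z hx hz
    have hz0 : 0 < ‖z‖ := hS.trans hz
    set w : (EE N) := (S / ‖z‖) • z with hw
    have hwn : ‖w‖ = S := by
      rw [hw, norm_smul, Real.norm_of_nonneg (by positivity)]; field_simp
    have hzw : ‖z - w‖ = ‖z‖ - S := by
      have : z - w = (1 - S / ‖z‖) • z := by rw [hw, sub_smul, one_smul]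
      rw [this, norm_smul, Real.norm_of_nonneg]
      · field_simp
      · rw [sub_nonneg, div_le_one hz0]; exact hz.le
    have h1 := hin x w hx hwn.le
    rw [gout w hwn.ge] at h1
    rw [gout z hz.le]
    have h2 : ‖x - w‖ ≤ ‖x - z‖ + ‖z - w‖ := by
      simpa using norm_add_le (x - z) (z - w)
    have h3 : ‖z‖ - ‖x‖ ≤ ‖x - z‖ := by
      rw [norm_sub_rev]; exact norm_sub_norm_le z x
    have hKn : (0:ℝ) ≤ K := K.2
    have h4 : ‖x - w‖ ≤ 2 * ‖x - z‖ := by linarith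
    calc _ ≤ K * ‖x - w‖ := h1
      _ ≤ K * (2 * ‖x - z‖) := by gcongr
      _ = _ := by ring
  have hlip : ∀ x z, ‖g x - g z‖ ≤ 2 * K * ‖x - z‖ := by
    intro x z
    have hKn : (0:ℝ) ≤ K := K.2
    rcases le_or_gt ‖x‖ S with hx | hx <;> rcases le_or_gt ‖z‖ S with hz | hz
    · refine (hin x z hx hz).trans ?_
      have := norm_nonneg (x - z)
      nlinarith [mul_nonneg hKn this]
    · exact hmix x z hx hz
    · rw [norm_sub_rev, norm_sub_rev x]; exact hmix z x hz hx
    · rw [gout x hx.le, gout z hz.le]; simp; positivity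
  set k : ℝ := 2 * K with hk
  have hk0 : 0 ≤ k := by positivity
  obtain ⟨t, w, ht, hw1, hw⟩ := det_interp (N := N) (1 / (k + 1)) (by positivity)
  have ht1 : ∀ i, t i < 1 := fun i => (ht i).2.trans_le (by
    rw [div_le_one (by positivity)]; linarith)
  have htk : ∀ i, t i * k < 1 := fun i => by
    have := (ht i).2
    rw [lt_div_iff₀ (by positivity)] at this
    nlinarith [(ht i).1]
  set B : Set (EE N) := ball 0 S with hB
  set A : (EE N) → (EE N) →L[ℝ] (EE N) := fun x => fderiv ℝ H x - ContinuousLinearMap.id ℝ (EE N) with hA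
  have hHd : ∀ x ∈ B, HasFDerivAt H (fderiv ℝ H x) x := fun x hx =>
    ((hH x (ball_subset_closedBall hx)).differentiableAt (by norm_num)).hasFDerivAt
  have hgd : ∀ x ∈ B, HasFDerivAt g (A x) x := by
    intro x hx
    refine ((hHd x hx).sub (hasFDerivAt_id x)).congr_of_eventuallyEq ?_
    filter_upwards [isOpen_ball.mem_nhds hx] with z hz
    exact gin z (by simpa [B] using (mem_ball.1 hz).le)
  have hAn : ∀ x ∈ B, ‖A x‖ ≤ k := by
    intro x hx
    exact (hgd x hx).le_of_lip' hk0 (Filter.Eventually.of_forall fun z => hlip z x)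
  have hdet : ∀ i, ∀ x ∈ B, 0 < (ContinuousLinearMap.id ℝ (EE N) + t i • A x).det := fun i x hx =>
    det_pos_aux (A x) k (t i) hk0 (hAn x hx) (ht i).1 (htk i)
  have hinj : ∀ i, Function.Injective (fun x => x + t i • g x) := by
    intro i x z hxz
    simp only at hxz
    by_contra hne
    have hp : 0 < ‖x - z‖ := norm_pos_iff.2 (sub_ne_zero.2 hne)
    have h1 : x - z = - (t i • (g x - g z)) := by
      rw [smul_sub, neg_sub, sub_eq_sub_iff_add_eq_add, hxz, add_comm]
    have h2 : ‖x - z‖ ≤ t i * (k * ‖x - z‖) := by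
      conv_lhs => rw [h1]
      rw [norm_neg, norm_smul, Real.norm_of_nonneg (ht i).1.le]
      gcongr
      · exact (ht i).1.le
      · exact hlip x z
    nlinarith [htk i]
  have hsurj : ∀ i, ∀ y : (EE N), ∃ x, x + t i • g x = y := by
    intro i y
    have hc : ContractingWith ⟨t i * k, mul_nonneg (ht i).1.le hk0⟩ (fun x => y - t i • g x) := by
      refine ⟨by exact_mod_cast htk i, LipschitzWith.of_dist_le_mul fun x z => ?_⟩
      rw [dist_eq_norm, dist_eq_norm]
      have : y - t i • g x - (y - t i • g z) = - (t i • (g x - g z)) := by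
        rw [smul_sub]; abel
      rw [this, norm_neg, norm_smul, Real.norm_of_nonneg (ht i).1.le]
      change _ ≤ t i * k * _
      rw [mul_assoc]
      gcongr
      · exact (ht i).1.le
      · exact hlip x z
    refine ⟨hc.fixedPoint, ?_⟩
    have := hc.fixedPoint_isFixedPt
    simp only [Function.IsFixedPt] at this
    conv_lhs => enter [1]; rw [← this]
    abel
  have himg : ∀ i, (fun x => x + t i • g x) '' B = B := by
    intro i
    apply Subset.antisymm
    · rintro _ ⟨x, hx, rfl⟩
      have hx' : ‖x‖ < S := by simpa [B] using hx
      have : x + t i • g x = (1 - t i) • x + t i • H x := by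
        rw [gin x hx'.le, smul_sub, sub_smul, one_smul]; abel
      simp only [B, mem_ball_zero_iff, this]
      calc _ ≤ ‖(1 - t i) • x‖ + ‖t i • H x‖ := norm_add_le _ _
        _ = (1 - t i) * ‖x‖ + t i * S := by
            rw [norm_smul, norm_smul, Real.norm_of_nonneg (ht i).1.le,
              Real.norm_of_nonneg (by linarith [ht1 i]), hn x (by simpa using hx'.le)]
        _ < S := by nlinarith [ht1 i]
    · intro y hy
      obtain ⟨x, hx⟩ := hsurj i y
      refine ⟨x, ?_, hx⟩
      by_contra hxB
      have hxS : S ≤ ‖x‖ := by simpa [B] using hxB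
      rw [gout x hxS, smul_zero, add_zero] at hx
      exact hxB (hx ▸ hy)
  have hfd : ∀ i, ∀ x ∈ B, HasFDerivWithinAt (fun x => x + t i • g x)
      (ContinuousLinearMap.id ℝ (EE N) + t i • A x) B x := fun i x hx =>
    ((hasFDerivAt_id x).add ((hgd x hx).const_smul (t i))).hasFDerivWithinAt
  have hBm : MeasurableSet B := measurableSet_ball
  have hBfin : volume B ≠ ⊤ := measure_ball_lt_top.ne
  have hint : ∀ i, IntegrableOn (fun x => (ContinuousLinearMap.id ℝ (EE N) + t i • A x).det) B volume := by
    intro i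
    have h := (integrableOn_image_iff_integrableOn_abs_det_fderiv_smul volume hBm (hfd i)
      (hinj i).injOn (fun _ => (1:ℝ))).1 (by rw [himg i]; exact integrableOn_const hBfin)
    refine h.congr_fun (fun x hx => ?_) hBm
    simp [abs_of_pos (hdet i x hx)]
  have hval : ∀ i, ∫ x in B, (ContinuousLinearMap.id ℝ (EE N) + t i • A x).det = volume.real B := by
    intro i
    have h := integral_image_eq_integral_abs_det_fderiv_smul volume hBm (hfd i)
      (hinj i).injOn (fun _ => (1:ℝ))
    rw [himg i] at h
    rw [setIntegral_congr_fun hBm (g := fun x => |(ContinuousLinearMap.id ℝ (EE N) + t i • A x).det| • (1:ℝ))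
      (fun x hx => by simp [abs_of_pos (hdet i x hx)]), ← h]
    simp
  have hzero : ∀ x ∈ B, (ContinuousLinearMap.id ℝ (EE N) + A x).det = 0 := by
    intro x hx
    have e : ContinuousLinearMap.id ℝ (EE N) + A x = fderiv ℝ H x := by simp [hA]
    rw [e]
    by_contra hne
    have hsur : Function.Surjective (fderiv ℝ H x) :=
      ((fderiv ℝ H x).toContinuousLinearEquivOfDetNeZero hne).surjective
    have h1 : HasFDerivAt (fun z => inner ℝ (H z) (H z)) (0 : (EE N) →L[ℝ] ℝ) x := by
      refine (hasFDerivAt_const (S * S) x).congr_of_eventuallyEq ?_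
      filter_upwards [isOpen_ball.mem_nhds hx] with z hz
      rw [real_inner_self_eq_norm_mul_norm, hn z (ball_subset_closedBall hz)]
    have h2 := h1.unique ((hHd x hx).inner ℝ (hHd x hx))
    obtain ⟨v, hv⟩ := hsur (H x)
    have h3 := congrArg (fun L : (EE N) →L[ℝ] ℝ => L v) h2
    simp [hv] at h3
    have := hn x (ball_subset_closedBall hx)
    rw [this] at h3
    nlinarith
  have hfinal : ∫ x in B, (ContinuousLinearMap.id ℝ (EE N) + A x).det = volume.real B := by
    rw [show (fun x => (ContinuousLinearMap.id ℝ (EE N) + A x).det) = fun x => ∑ i, w i * (ContinuousLinearMap.id ℝ (EE N) + t i • A x).det from funext fun x => hw (A x)]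
    rw [integral_finsetSum _ (fun i _ => (hint i).const_mul (w i))]
    simp_rw [integral_const_mul, hval, ← Finset.sum_mul, hw1, one_mul]
  rw [setIntegral_congr_fun hBm (g := fun _ => (0:ℝ)) (fun x hx => hzero x hx)] at hfinal
  simp at hfinal
  have hpos : 0 < volume.real B := by
    rw [measureReal_def]
    exact ENNReal.toReal_pos (measure_ball_pos volume _ hS).ne' hBfin
  linarith

lemma brouwer_bdd {N : ℕ} (P : EE N → EE N) (hP : Continuous P) (R : ℝ) (hR : ∀ x, ‖P x‖ ≤ R) :
    ∃ x, P x = x := by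
  by_contra hcon
  push Not at hcon
  have hR0 : 0 ≤ R := (norm_nonneg _).trans (hR 0)
  obtain ⟨Q, hQ, hQP, -⟩ := hP.exists_contDiff_approx 1 (ε := fun x => min 1 ‖P x - x‖)
    (by fun_prop) (fun x => lt_min one_pos (norm_pos_iff.2 (sub_ne_zero.2 (hcon x))))
  have hQR : ∀ x, ‖Q x‖ < R + 1 := by
    intro x
    have h1 := (hQP x).trans_le (min_le_left _ _)
    rw [dist_eq_norm] at h1
    have := norm_add_le (Q x - P x) (P x)
    rw [sub_add_cancel] at this
    linarith [hR x]
  have hQx : ∀ x, Q x ≠ x := by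
    intro x hx
    have h1 := (hQP x).trans_le (min_le_right _ _)
    rw [dist_eq_norm, hx, norm_sub_rev] at h1
    exact lt_irrefl _ h1
  let χ : ContDiffBump (0 : EE N) := ⟨R + 1, R + 2, by linarith, by linarith⟩
  set G : EE N → EE N := fun x => x - χ x • Q x with hG
  have hGne : ∀ x, G x ≠ 0 := by
    intro x hx
    have hx1 : x = χ x • Q x := sub_eq_zero.1 hx
    have hx2 : ‖x‖ ≤ R + 1 := by
      rw [hx1, norm_smul, Real.norm_of_nonneg χ.nonneg]
      have := hQR x
      nlinarith [χ.le_one (x := x), norm_nonneg (Q x), χ.nonneg (x := x)]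
    have hx3 : χ x = 1 := χ.one_of_mem_closedBall (by simpa [χ] using hx2)
    rw [hx3, one_smul] at hx1
    exact hQx x hx1.symm
  have hGd : ContDiff ℝ 1 G := contDiff_id.sub (χ.contDiff.smul (by simpa using hQ))
  have hS : 0 < R + 2 := by linarith
  refine no_retraction (R + 2) hS (fun x => ((R + 2) * ‖G x‖⁻¹) • G x) ?_ ?_ ?_
  · intro x _
    have h1 : ContDiffAt ℝ 1 (fun x => ‖G x‖) x := hGd.contDiffAt.norm ℝ (hGne x)
    exact (contDiffAt_const.mul (h1.inv (norm_ne_zero_iff.2 (hGne x)))).smul hGd.contDiffAt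
  · intro x _
    have := norm_pos_iff.2 (hGne x)
    rw [norm_smul, Real.norm_of_nonneg (by positivity)]
    field_simp
  · intro x hx
    have hx1 : ‖x‖ = R + 2 := by simpa using hx
    have h0 : χ x = 0 := χ.zero_of_le_dist (by simp [χ, hx1])
    have : G x = x := by simp [hG, h0]
    simp only [this, hx1]
    rw [mul_inv_cancel₀ hS.ne', one_smul]

lemma ray_aux (g g' : ℝ → ℝ) (c : ℝ) (hg : ∀ s, HasDerivAt g (g' s) s) 
    (hpos : ∀ s, 0 ≤ s → g s = c → 0 < g' s) (s₁ s₂ : ℝ) (h1 : 0 ≤ s₁) (h12 : s₁ < s₂)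
    (h2 : g s₂ ≤ c) : g s₁ < c := by
  by_contra hcon
  push Not at hcon
  have key := image_le_of_deriv_right_lt_deriv_boundary (f := fun s => - g s) (f' := fun s => - g' s)
    (a := s₁) (b := s₂) (B := fun _ => -c) (B' := fun _ => 0)
    (fun s _ => (hg s).neg.continuousAt.continuousWithinAt) (fun s _ => (hg s).neg.hasDerivWithinAt)
    (by simpa using hcon) (fun s => hasDerivAt_const s _)
    (fun s hs h => by
      have := hpos s (h1.trans hs.1) (by simpa using h)
      linarith)
  have key' : ∀ s ∈ Icc s₁ s₂, c ≤ g s := fun s hs => by have := key hs; linarith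
  have he : g s₂ = c := le_antisymm h2 (key' s₂ ⟨h12.le, le_rfl⟩)
  have hp := hpos s₂ (h1.trans h12.le) he
  -- slope
  have hsl := (hasDerivAt_iff_tendsto_slope_left_right.1 (hg s₂)).1
  have hev := hsl.eventually (lt_mem_nhds hp)
  have hev2 : ∀ᶠ s in nhdsWithin s₂ (Iio s₂), s ∈ Ioo s₁ s₂ := Ioo_mem_nhdsLT h12
  obtain ⟨s, hs1, hs2⟩ := (hev.and hev2).exists
  rw [slope_def_field, he] at hs1
  have h3 := key' s ⟨hs2.1.le, hs2.2.le⟩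
  have h4 : (g s - c) / (s - s₂) ≤ 0 := div_nonpos_of_nonneg_of_nonpos (by linarith) (by linarith [hs2.2])
  linarith



lemma star_aux {N : ℕ} (V : EE N → ℝ) (hV : ContDiff ℝ 1 V) (p : EE N) (c : ℝ) (hpc : V p < c)
    (hrad : ∀ u ∈ V ⁻¹' {c}, ⟪gradient V u, p - u⟫ < 0) (d : EE N) (s₁ s₂ : ℝ) (h1 : 0 ≤ s₁)
    (h12 : s₁ < s₂) (h2 : V (p + s₂ • d) ≤ c) : V (p + s₁ • d) < c := by
  have hdiff : Differentiable ℝ V := hV.differentiable (by norm_num)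
  refine ray_aux (fun s => V (p + s • d)) (fun s => ⟪gradient V (p + s • d), d⟫) c ?_ ?_ s₁ s₂ h1 h12 h2
  · intro s
    have e : ⟪gradient V (p + s • d), d⟫ = fderiv ℝ V (p + s • d) d := by simp
    have hl : HasDerivAt (fun s : ℝ => p + s • d) d s := by
      simpa using ((hasDerivAt_id s).smul_const d).const_add p
    rw [e]
    exact (hdiff (p + s • d)).hasFDerivAt.comp_hasDerivAt s hl
  · intro s hs h
    have h0 : s ≠ 0 := by
      rintro rfl
      simp at h
      linarith
    have hs' : 0 < s := lt_of_le_of_ne hs h0.symm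
    have := hrad (p + s • d) h
    have e : p - (p + s • d) = (-s) • d := by rw [neg_smul]; abel
    rw [e, inner_smul_right] at this
    nlinarith

lemma sublevel_bdd {N : ℕ} (hN : 2 ≤ N) (V : EE N → ℝ) (hV : ContDiff ℝ 1 V) (p : EE N) (c : ℝ) (hpc : V p < c)
    (hbdd : Bornology.IsBounded (V ⁻¹' {c})) (hlevne : (V ⁻¹' {c}).Nonempty)
    (hrad : ∀ u ∈ V ⁻¹' {c}, ⟪gradient V u, p - u⟫ < 0) : ∃ R, ∀ x, V x ≤ c → ‖x - p‖ ≤ R := by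
  obtain ⟨R, hR⟩ := hbdd.subset_closedBall p
  obtain ⟨u, hu⟩ := hlevne
  refine ⟨R, fun x hx => ?_⟩
  by_contra hlt
  push Not at hlt
  set ρ := ‖x - p‖ with hρ
  have huR : ‖u - p‖ ≤ R := by simpa [dist_eq_norm] using hR hu
  have hup : 0 < ‖u - p‖ := by
    refine norm_pos_iff.2 (sub_ne_zero.2 ?_)
    rintro rfl
    exact hpc.ne hu
  have hc : IsPreconnected (sphere p ρ) :=
    (isConnected_sphere (by rw [← Module.finrank_eq_rank, finrank_euclideanSpace_fin]; exact_mod_cast hN) p (norm_nonneg _)).isPreconnected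
  have hz : V (p + (ρ / ‖u - p‖) • (u - p)) > c := by
    by_contra hcon
    push Not at hcon
    have := star_aux V hV p c hpc hrad (u - p) 1 _ zero_le_one
      (by rw [lt_div_iff₀ hup]; linarith) hcon
    rw [one_smul, add_sub_cancel] at this
    exact this.ne hu
  have hzs : p + (ρ / ‖u - p‖) • (u - p) ∈ sphere p ρ := by
    rw [mem_sphere, dist_eq_norm, add_sub_cancel_left, norm_smul, Real.norm_of_nonneg (by positivity)]
    field_simp
  have hxs : x ∈ sphere p ρ := by rw [mem_sphere, dist_eq_norm]
  obtain ⟨y, hy, hyc⟩ := hc.intermediate_value hxs hzs hV.continuous.continuousOn ⟨hx, hz.le⟩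
  have h1 := hR (show y ∈ V ⁻¹' {c} from hyc)
  rw [mem_closedBall, mem_sphere.1 hy] at h1
  linarith

lemma exists_retr {N : ℕ} (V : EE N → ℝ) (hV : ContDiff ℝ 1 V) (p : EE N) (c : ℝ) (hpc : V p < c)
    (hrad : ∀ u ∈ V ⁻¹' {c}, ⟪gradient V u, p - u⟫ < 0) :
    ∃ r : EE N → EE N, Continuous r ∧ (∀ x, V (r x) ≤ c) ∧ (∀ x, V x ≤ c → r x = x) := by
  have hVc := hV.continuous
  have hex : ∀ x : EE N, ∃ s ∈ Icc (0:ℝ) 1, V (p + s • (x - p)) ≤ c ∧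
      ∀ s' ∈ Icc (0:ℝ) 1, V (p + s' • (x - p)) ≤ c → s' ≤ s := by
    intro x
    have hcpt : IsCompact (Icc (0:ℝ) 1 ∩ {s | V (p + s • (x - p)) ≤ c}) :=
      isCompact_Icc.inter_right (isClosed_le (by fun_prop) continuous_const)
    obtain ⟨s, hs, hmax⟩ := hcpt.exists_isMaxOn ⟨0, by simp, by simpa using hpc.le⟩ continuous_id.continuousOn
    exact ⟨s, hs.1, hs.2, fun s' h1 h2 => hmax ⟨h1, h2⟩⟩
  choose σ hσ1 hσ2 hσ3 using hex
  have hσc : Continuous σ := by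
    rw [continuous_iff_continuousAt]
    intro x
    refine tendsto_order.2 ⟨fun a ha => ?_, fun a ha => ?_⟩
    · rcases lt_or_ge a 0 with h | h
      · exact Filter.Eventually.of_forall fun z => h.trans_le (hσ1 z).1
      · obtain ⟨b, hab, hbσ⟩ := exists_between ha
        have hb := star_aux V hV p c hpc hrad (x - p) b (σ x) (by linarith) hbσ (hσ2 x)
        have hcont : Continuous fun z => V (p + b • (z - p)) := by fun_prop
        filter_upwards [hcont.continuousAt.eventually (gt_mem_nhds hb)] with z hz
        exact hab.trans_le (hσ3 z b ⟨by linarith, by linarith [(hσ1 x).2]⟩ (le_of_lt hz))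
    · rcases lt_or_ge 1 a with h | h
      · exact Filter.Eventually.of_forall fun z => (hσ1 z).2.trans_lt h
      · have ha0 : 0 ≤ a := (hσ1 x).1.trans ha.le
        have hb : c < V (p + a • (x - p)) := by
          by_contra hcon
          push Not at hcon
          exact absurd (hσ3 x a ⟨ha0, h⟩ hcon) (not_le.2 ha)
        have hcont : Continuous fun z => V (p + a • (z - p)) := by fun_prop
        filter_upwards [hcont.continuousAt.eventually (lt_mem_nhds hb)] with z hz
        by_contra hcon
        push Not at hcon
        rcases hcon.eq_or_lt with h' | h'
        · have := hσ2 z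
          rw [← h'] at this
          linarith
        · have := star_aux V hV p c hpc hrad (z - p) a (σ z) ha0 h' (hσ2 z)
          linarith
  refine ⟨fun x => p + σ x • (x - p), by fun_prop, hσ2, fun x hx => ?_⟩
  have h1 : σ x = 1 := le_antisymm (hσ1 x).2 (hσ3 x 1 ⟨zero_le_one, le_rfl⟩ (by simpa using hx))
  simp [h1]


lemma euler_step {N : ℕ} (V : EE N → ℝ) (hV : ContDiff ℝ 1 V) (c T : ℝ) (w : ℝ → EE N → EE N)
    (hw : Continuous (fun q : ℝ × EE N => w q.1 q.2))
    (hM : IsCompact {x | V x ≤ c})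
    (hneg : ∀ u ∈ V ⁻¹' {c}, ∀ t ∈ Icc (0 : ℝ) T, fderiv ℝ V u (w t u) < 0) :
    ∃ h₀ : ℝ, 0 < h₀ ∧ ∀ h : ℝ, 0 < h → h < h₀ → ∀ t ∈ Icc (0 : ℝ) T, ∀ u, V u ≤ c → V (u + h • w t u) ≤ c := by
  have hVc := hV.continuous
  have hdiff : Differentiable ℝ V := hV.differentiable (by norm_num)
  have hfd : Continuous (fderiv ℝ V) := hV.continuous_fderiv (by norm_num)
  have key : ∀ᶠ h in nhds (0:ℝ), ∀ q ∈ Icc (0:ℝ) T ×ˢ {x | V x ≤ c},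
      (0 < h → V q.2 ≤ c → V (q.2 + h • w q.1 q.2) ≤ c) := by
    refine (isCompact_Icc.prod hM).eventually_forall_of_forall_eventually ?_
    rintro ⟨t, u⟩ ⟨ht, hu⟩
    simp only at ht hu
    rcases (show V u ≤ c from hu).lt_or_eq with hlt | heq
    · have hcont : Continuous fun z : ℝ × (ℝ × EE N) => V (z.2.2 + z.1 • w z.2.1 z.2.2) := by
        have := hw.comp (continuous_snd (X := ℝ) (Y := ℝ × EE N))
        simp only [Function.comp_def] at this
        fun_prop
      have h0 : V (u + (0:ℝ) • w t u) < c := by simpa using hlt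
      filter_upwards [(hcont.continuousAt (x := (0, (t, u)))).eventually (gt_mem_nhds h0)] with z hz _ _
      exact le_of_lt hz
    · have hcont : Continuous fun z : ℝ × (ℝ × EE N) =>
          fderiv ℝ V (z.2.2 + z.1 • w z.2.1 z.2.2) (w z.2.1 z.2.2) := by
        have := hw.comp (continuous_snd (X := ℝ) (Y := ℝ × EE N))
        simp only [Function.comp_def] at this
        exact (hfd.comp (by fun_prop)).clm_apply this
      have h0 : fderiv ℝ V (u + (0:ℝ) • w t u) (w t u) < 0 := by
        simpa using hneg u heq t ht
      have hev := (hcont.continuousAt (x := (0, (t, u)))).eventually (gt_mem_nhds h0)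
      rw [nhds_prod_eq, Filter.eventually_prod_iff] at hev
      obtain ⟨pa, hpa, pb, hpb, hab⟩ := hev
      obtain ⟨δ, hδ, hpa'⟩ := Metric.eventually_nhds_iff.1 hpa
      rw [nhds_prod_eq, Filter.eventually_prod_iff]
      refine ⟨fun s => dist s 0 < δ, Metric.eventually_nhds_iff.2 ⟨δ, hδ, fun _ h => h⟩, pb, hpb, ?_⟩
      rintro h hh ⟨t', u'⟩ hq hpos hVu
      simp only at hVu ⊢
      have hd : ∀ s : ℝ, HasDerivAt (fun s : ℝ => V (u' + s • w t' u'))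
          (fderiv ℝ V (u' + s • w t' u') (w t' u')) s := by
        intro s
        have hl : HasDerivAt (fun s : ℝ => u' + s • w t' u') (w t' u') s := by
          simpa using ((hasDerivAt_id s).smul_const (w t' u')).const_add u'
        exact (hdiff _).hasFDerivAt.comp_hasDerivAt s hl
      obtain ⟨ξ, hξ, hξ'⟩ := exists_hasDerivAt_eq_slope (fun s : ℝ => V (u' + s • w t' u'))
        (fun s => fderiv ℝ V (u' + s • w t' u') (w t' u')) hpos
        (fun s _ => (hd s).continuousAt.continuousWithinAt) (fun s _ => hd s)
      have h1 : pa ξ := hpa' (by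
        rw [Real.dist_eq, sub_zero] at hh ⊢
        rw [abs_of_pos hξ.1]
        rw [abs_of_pos hpos] at hh
        exact hξ.2.trans hh)
      have h2 := hab h1 hq
      simp only at h2
      simp only [zero_smul, add_zero, sub_zero] at hξ'
      rw [hξ', div_lt_iff₀ hpos] at h2
      linarith
  obtain ⟨h₀, hh₀, H⟩ := Metric.eventually_nhds_iff.1 key
  refine ⟨h₀, hh₀, fun h hpos hlt t ht u hu => ?_⟩
  exact H (y := h) (by rw [Real.dist_eq, sub_zero, abs_of_pos hpos]; exact hlt) (t, u) ⟨ht, hu⟩ hpos hu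

lemma euler_orbit {N : ℕ} (V : EE N → ℝ) (hV : ContDiff ℝ 1 V) (c T : ℝ) (hT : 0 < T)
    (w : ℝ → EE N → EE N)
    (hw : Continuous (fun q : ℝ × EE N => w q.1 q.2))
    (hM : IsCompact {x | V x ≤ c})
    (hneg : ∀ u ∈ V ⁻¹' {c}, ∀ t ∈ Icc (0 : ℝ) T, fderiv ℝ V u (w t u) < 0)
    (r : EE N → EE N) (hr : Continuous r) (hr1 : ∀ x, V (r x) ≤ c) (hr2 : ∀ x, V x ≤ c → r x = x)
    (n : ℕ) :
    ∃ m : ℕ, n ≤ m ∧ 0 < m ∧ ∃ x : ℕ → EE N, x 0 = x m ∧ (∀ k ≤ m, V (x k) ≤ c) ∧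
      ∀ k < m, x (k+1) = x k + (T/m) • w (k * (T/m)) (x k) := by
  obtain ⟨h₀, hh₀, H⟩ := euler_step V hV c T w hw hM hneg
  obtain ⟨m', hm'⟩ := exists_nat_gt (T / h₀)
  set m := max m' (n + 1) with hm
  have hm0 : 0 < m := by omega
  have hmR : (0:ℝ) < m := by exact_mod_cast hm0
  have hh : T / m < h₀ := by
    rw [div_lt_iff₀ hmR]
    rw [div_lt_iff₀ hh₀] at hm'
    have : (m':ℝ) ≤ m := by exact_mod_cast le_max_left _ _
    nlinarith
  have hhp : 0 < T / m := by positivity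
  let Φ : ℕ → EE N → EE N := fun k u =>
    Nat.rec u (fun k x => x + (T/m) • w (k * (T/m)) x) k
  have Φ0 : ∀ u, Φ 0 u = u := fun u => rfl
  have Φs : ∀ k u, Φ (k+1) u = Φ k u + (T/m) • w (k * (T/m)) (Φ k u) := fun k u => rfl
  have hc : ∀ k, Continuous (Φ k) := by
    intro k
    induction k with
    | zero => exact continuous_id
    | succ k ih =>
      have h1 : Continuous fun u => w (k * (T/m)) (Φ k u) := hw.comp (continuous_const.prodMk ih)
      exact ih.add (h1.const_smul (T/m))
  have hin : ∀ u, V u ≤ c → ∀ k ≤ m, V (Φ k u) ≤ c := by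
    intro u hu k
    induction k with
    | zero => intro _; exact hu
    | succ k ih =>
      intro hk
      rw [Φs]
      refine H _ hhp hh _ ⟨by positivity, ?_⟩ _ (ih (by omega))
      have : (k:ℝ) ≤ m := by exact_mod_cast (by omega : k ≤ m)
      calc (k:ℝ) * (T/m) ≤ m * (T/m) := by gcongr
        _ = T := by field_simp
  obtain ⟨R, hR⟩ := hM.isBounded.exists_norm_le
  obtain ⟨x, hx⟩ := brouwer_bdd (fun x => Φ m (r x)) ((hc m).comp hr) R
    (fun x => hR _ (hin _ (hr1 x) m le_rfl))
  have hxM : V x ≤ c := by rw [← hx]; exact hin _ (hr1 x) m le_rfl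
  simp only [hr2 x hxM] at hx
  exact ⟨m, by omega, hm0, fun k => Φ k x, hx.symm, hin x hxM, fun k _ => Φs k x⟩

lemma telescope {E : Type*} [NormedAddCommGroup E] [NormedSpace ℝ E] (x : ℕ → E) (a : E) (b : ℝ) (i j : ℕ)
    (hij : i ≤ j) (h : ∀ k, i ≤ k → k < j → ‖x (k+1) - x k - a‖ ≤ b) :
    ‖x j - x i - ((j:ℝ) - i) • a‖ ≤ ((j:ℝ) - i) * b := by
  induction j, hij using Nat.le_induction with
  | base => simp
  | succ j hij ih =>
    have h1 := ih (fun k h1 h2 => h k h1 (by omega))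
    have h2 := h j hij (by omega)
    have : x (j+1) - x i - (((j+1:ℕ):ℝ) - i) • a = (x j - x i - ((j:ℝ) - i) • a) + (x (j+1) - x j - a) := by
      push_cast
      module
    rw [this]
    refine (norm_add_le _ _).trans ?_
    push_cast
    linarith

lemma euler_limit {N : ℕ} (M : Set (EE N)) (hM : IsCompact M) (T : ℝ) (hT : 0 < T)
    (f : ℝ → EE N → EE N) (hf : Continuous (fun q : ℝ × EE N => f q.1 q.2)) (p : EE N)
    (m : ℕ → ℕ) (hm : ∀ n, n ≤ m n) (hm0 : ∀ n, 0 < m n) (ε : ℕ → ℝ) (hε0 : ∀ n, 0 ≤ ε n) (hε1 : ∀ n, ε n ≤ 1)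
    (hε : Filter.Tendsto ε Filter.atTop (nhds 0))
    (x : ℕ → ℕ → EE N) (hper : ∀ n, x n 0 = x n (m n)) (hxM : ∀ n, ∀ k ≤ m n, x n k ∈ M)
    (hstep : ∀ n, ∀ k < m n, x n (k+1) = x n k +
      (T/m n) • (f (k * (T/m n)) (x n k) + ε n • (p - x n k))) :
    ∃ y : ℝ → EE N, (∀ t ∈ Icc (0 : ℝ) T, HasDerivWithinAt y (f t (y t)) (Icc (0 : ℝ) T) t) ∧
      y 0 = y T ∧ (∀ t ∈ Icc (0 : ℝ) T, y t ∈ M) := by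
  -- bounds
  obtain ⟨C₁, hC₁⟩ := ((isCompact_Icc (a := (0:ℝ)) (b := T)).prod hM).exists_bound_of_continuousOn hf.continuousOn
  obtain ⟨C₂, hC₂⟩ := hM.exists_bound_of_continuousOn (f := fun x => p - x) (by fun_prop)
  have hmR : ∀ n, (0:ℝ) < m n := fun n => by exact_mod_cast hm0 n
  set h : ℕ → ℝ := fun n => T / m n with hh
  have hhpos : ∀ n, 0 < h n := fun n => div_pos hT (hmR n)
  have hmh : ∀ n, m n * h n = T := fun n => by
    have := hmR n
    simp only [hh]; field_simp
  have hmem : ∀ n k, k ≤ m n → (k:ℝ) * h n ∈ Icc 0 T := fun n k hk => by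
    have := hhpos n
    refine ⟨by positivity, ?_⟩
    rw [← hmh n]
    gcongr
  have hC₂0 : 0 ≤ C₂ := (norm_nonneg _).trans (hC₂ _ (hxM 0 0 (by omega)))
  have hC₁0 : 0 ≤ C₁ := (norm_nonneg _).trans
    (hC₁ (0, x 0 0) ⟨⟨le_rfl, hT.le⟩, hxM 0 0 (by omega)⟩)
  set C := C₁ + C₂ + 1 with hC
  have hCpos : 0 < C := by positivity
  have hlip : ∀ n k l, k ≤ m n → l ≤ m n → ‖x n k - x n l‖ ≤ |(k:ℝ) - l| * (h n * C) := by
    intro n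
    have main : ∀ k l, k ≤ l → l ≤ m n → ‖x n l - x n k‖ ≤ ((l:ℝ) - k) * (h n * C) := by
      intro k l hkl hl
      have := telescope (x n) 0 (h n * C) k l hkl (fun i hi1 hi2 => ?_)
      · simpa using this
      · rw [hstep n i (by omega), sub_zero, add_sub_cancel_left, norm_smul, Real.norm_of_nonneg (hhpos n).le]
        refine mul_le_mul_of_nonneg_left ?_ (hhpos n).le
        have h1 := hC₁ (i * h n, x n i) ⟨hmem n i (by omega), hxM n i (by omega)⟩
        have h2 := hC₂ (x n i) (hxM n i (by omega))
        refine (norm_add_le _ _).trans ?_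
        rw [norm_smul, Real.norm_of_nonneg (hε0 n)]
        have h3 : ε n * ‖p - x n i‖ ≤ 1 * C₂ := mul_le_mul (hε1 n) h2 (norm_nonneg _) zero_le_one
        simp only at h1
        linarith
    intro k l hk hl
    rcases le_total k l with hkl | hkl
    · rw [norm_sub_rev, abs_sub_comm, abs_of_nonneg (by
        rw [sub_nonneg]; exact_mod_cast hkl)]
      exact main k l hkl hl
    · rw [abs_of_nonneg (by rw [sub_nonneg]; exact_mod_cast hkl)]
      exact main l k hkl hk
  -- indices
  set ι : ℕ → ℝ → ℕ := fun n t => ⌊t / h n⌋₊ with hι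
  have hιle : ∀ n, ∀ t ∈ Icc (0:ℝ) T, (ι n t : ℝ) * h n ≤ t := fun n t ht => by
    have := Nat.floor_le (div_nonneg ht.1 (hhpos n).le)
    rwa [le_div_iff₀ (hhpos n)] at this
  have hιlt : ∀ n, ∀ t ∈ Icc (0:ℝ) T, t < (ι n t : ℝ) * h n + h n := fun n t ht => by
    have := Nat.lt_floor_add_one (t / h n)
    rw [div_lt_iff₀ (hhpos n)] at this
    linarith
  have hιm : ∀ n, ∀ t ∈ Icc (0:ℝ) T, ι n t ≤ m n := fun n t ht => by
    have h1 := hιle n t ht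
    have h2 : (ι n t : ℝ) * h n ≤ m n * h n := by rw [hmh]; exact h1.trans ht.2
    exact_mod_cast le_of_mul_le_mul_right h2 (hhpos n)
  -- limits
  set U : Ultrafilter ℕ := Filter.hyperfilter ℕ with hU
  have hUle : (U : Filter ℕ) ≤ Filter.atTop := Nat.hyperfilter_le_atTop
  have hht : Filter.Tendsto h U (nhds 0) := by
    have h1 : Filter.Tendsto (fun n => (m n : ℝ)) Filter.atTop Filter.atTop :=
      tendsto_natCast_atTop_atTop.comp (Filter.tendsto_atTop_mono hm Filter.tendsto_id)
    exact (h1.const_div_atTop T).mono_left hUle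
  have hεt : Filter.Tendsto ε U (nhds 0) := hε.mono_left hUle
  have hιt : ∀ t ∈ Icc (0:ℝ) T, Filter.Tendsto (fun n => (ι n t : ℝ) * h n) U (nhds t) := by
    intro t ht
    have h1 : Filter.Tendsto (fun n => t - h n) U (nhds t) := by
      simpa using hht.const_sub t
    exact tendsto_of_tendsto_of_tendsto_of_le_of_le h1 tendsto_const_nhds
      (fun n => by have := hιlt n t ht; simp only; linarith) (fun n => hιle n t ht)
  have hlim : ∀ t ∈ Icc (0:ℝ) T, ∃ z ∈ M, Filter.Tendsto (fun n => x n (ι n t)) U (nhds z) := by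
    intro t ht
    obtain ⟨z, hz, hle⟩ := hM.ultrafilter_le_nhds' (U.map fun n => x n (ι n t))
      (Filter.mem_map.2 (Filter.univ_mem' fun n => hxM n _ (hιm n t ht)))
    exact ⟨z, hz, hle⟩
  choose! y hyM hy using hlim
  refine ⟨y, ?_, ?_, hyM⟩
  swap
  · have h0 := hy 0 ⟨le_rfl, hT.le⟩
    have h1 := hy T ⟨hT.le, le_rfl⟩
    have e : ∀ n, x n (ι n 0) = x n (ι n T) := by
      intro n
      have e1 : ι n 0 = 0 := by simp [hι]
      have e2 : ι n T = m n := by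
        have : T / h n = m n := by
          rw [div_eq_iff (hhpos n).ne', hmh]
        simp [hι, this]
      rw [e1, e2, hper]
    simp_rw [e] at h0
    exact tendsto_nhds_unique h0 h1
  intro t₀ ht₀
  set v := f t₀ (y t₀) with hv
  -- local estimate
  have hloc : ∀ η > 0, ∃ δ > 0, ∀ s₁ ∈ Icc (0:ℝ) T, ∀ s₂ ∈ Icc (0:ℝ) T, s₁ ≤ s₂ →
      |s₁ - t₀| < δ → |s₂ - t₀| < δ → ‖y s₂ - y s₁ - (s₂ - s₁) • v‖ ≤ (s₂ - s₁) * η := by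
    intro η hη
    obtain ⟨δ, hδ, hδf⟩ := Metric.continuous_iff.1 hf (t₀, y t₀) η hη
    refine ⟨min (δ/4) (δ / (4 * C)), by positivity, fun s₁ hs₁ s₂ hs₂ h12 hd1 hd2 => ?_⟩
    have hev1 : ∀ᶠ n in (U : Filter ℕ), h n < min (δ/8) (δ / (8 * C)) :=
      hht.eventually (gt_mem_nhds (by positivity))
    have hev2 : ∀ᶠ n in (U : Filter ℕ), dist (x n (ι n t₀)) (y t₀) < δ / 4 :=
      (hy t₀ ht₀).eventually (Metric.ball_mem_nhds _ (by positivity))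
    have hb : ∀ᶠ n in (U : Filter ℕ),
        ‖x n (ι n s₂) - x n (ι n s₁) - ((ι n s₂ : ℝ) * h n - ι n s₁ * h n) • v‖ ≤
          ((ι n s₂ : ℝ) * h n - ι n s₁ * h n) * (η + ε n * C) := by
      filter_upwards [hev1, hev2] with n hn1 hn2
      have hle : ι n s₁ ≤ ι n s₂ := by
        apply Nat.floor_le_floor
        have := hhpos n
        gcongr
      have := telescope (x n) (h n • v) (h n * (η + ε n * C)) _ _ hle (fun k hk1 hk2 => ?_)
      · rw [smul_smul, ← mul_assoc] at this
        simpa only [sub_mul] using this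
      · have hkm : k < m n := hk2.trans_le (hιm n s₂ hs₂)
        have hp := hhpos n
        have a1 : (ι n s₁ : ℝ) * h n ≤ k * h n := by gcongr
        have a2 : (k:ℝ) * h n ≤ ι n s₂ * h n := by gcongr
        have b1 := hιlt n s₁ hs₁
        have b2 := hιle n s₂ hs₂
        have c1 := hιlt n t₀ ht₀
        have c2 := hιle n t₀ ht₀
        rw [abs_lt] at hd1 hd2
        have m1 := min_le_left (δ/4) (δ / (4 * C))
        have m2 := min_le_right (δ/4) (δ / (4 * C))
        have m3 := min_le_left (δ/8) (δ / (8 * C))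
        have m4 := min_le_right (δ/8) (δ / (8 * C))
        have hk0 : |(k:ℝ) * h n - t₀| < δ := by
          rw [abs_lt]; constructor <;> linarith
        have hkx : dist (x n k) (y t₀) < δ := by
          have d1 := hlip n k (ι n t₀) hkm.le (hιm n t₀ ht₀)
          have d2 : |(k:ℝ) - ι n t₀| * (h n * C) = |(k:ℝ) * h n - ι n t₀ * h n| * C := by
            rw [← sub_mul, abs_mul, abs_of_pos hp, mul_assoc]
          have d3 : |(k:ℝ) * h n - ι n t₀ * h n| ≤ δ / (2 * C) := by
            have e1 : δ / (4 * C) + 2 * (δ / (8 * C)) = δ / (2 * C) := by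
              field_simp; norm_num
            rw [abs_le]; constructor <;> linarith
          have d4 : ‖x n k - x n (ι n t₀)‖ ≤ δ / 2 := by
            rw [d2] at d1
            refine d1.trans ?_
            calc _ ≤ δ / (2 * C) * C := by gcongr
              _ = δ / 2 := by field_simp
          have := dist_triangle (x n k) (x n (ι n t₀)) (y t₀)
          rw [dist_eq_norm (x n k) (x n (ι n t₀))] at this
          linarith
        have hfv : ‖f (k * h n) (x n k) - v‖ < η := by
          rw [← dist_eq_norm]
          refine hδf (k * h n, x n k) ?_
          rw [Prod.dist_eq]
          exact max_lt (by rw [Real.dist_eq]; exact hk0) hkx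
        rw [hstep n k hkm]
        have e : x n k + (T / (m n)) • (f (k * (T/m n)) (x n k) + ε n • (p - x n k)) - x n k - h n • v
            = h n • ((f (k * h n) (x n k) - v) + ε n • (p - x n k)) := by
          simp only [hh]; module
        rw [e, norm_smul, Real.norm_of_nonneg hp.le]
        refine mul_le_mul_of_nonneg_left ?_ hp.le
        refine (norm_add_le _ _).trans (add_le_add hfv.le ?_)
        rw [norm_smul, Real.norm_of_nonneg (hε0 n)]
        refine mul_le_mul_of_nonneg_left ?_ (hε0 n)
        have := hC₂ _ (hxM n k hkm.le)
        linarith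
    have hL : Filter.Tendsto (fun n => ‖x n (ι n s₂) - x n (ι n s₁) - ((ι n s₂ : ℝ) * h n - ι n s₁ * h n) • v‖)
        U (nhds ‖y s₂ - y s₁ - (s₂ - s₁) • v‖) :=
      ((((hy s₂ hs₂).sub (hy s₁ hs₁)).sub (((hιt s₂ hs₂).sub (hιt s₁ hs₁)).smul_const v))).norm
    have hR : Filter.Tendsto (fun n => ((ι n s₂ : ℝ) * h n - ι n s₁ * h n) * (η + ε n * C))
        U (nhds ((s₂ - s₁) * (η + 0 * C))) :=
      ((hιt s₂ hs₂).sub (hιt s₁ hs₁)).mul ((hεt.mul_const C).const_add η)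
    have := le_of_tendsto_of_tendsto hL hR hb
    simpa using this
  rw [hasDerivWithinAt_iff_isLittleO, Asymptotics.isLittleO_iff]
  intro η hη
  obtain ⟨δ, hδ, hloc'⟩ := hloc η hη
  filter_upwards [self_mem_nhdsWithin, mem_nhdsWithin_of_mem_nhds (Metric.ball_mem_nhds t₀ hδ)] with s hs hsδ
  rw [mem_ball, Real.dist_eq] at hsδ
  rcases le_total t₀ s with hle | hle
  · have := hloc' t₀ ht₀ s hs hle (by simpa using hδ) hsδ
    rw [Real.norm_of_nonneg (sub_nonneg.2 hle)]
    linarith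
  · have := hloc' s hs t₀ ht₀ hle hsδ (by simpa using hδ)
    rw [Real.norm_of_nonpos (sub_nonpos.2 hle)]
    have e : y s - y t₀ - (s - t₀) • v = - (y t₀ - y s - (t₀ - s) • v) := by module
    rw [e, norm_neg]
    linarith

lemma main_aux {N : ℕ} (hN : 2 ≤ N) {T : ℝ} (hT : 0 < T)
    (f : ℝ → EE N → EE N) (hf : Continuous (fun q : ℝ × EE N => f q.1 q.2))
    (V : EE N → ℝ) (hV : ContDiff ℝ 1 V)
    (p : EE N) (c : ℝ) (hpc : V p < c)
    (hbdd : Bornology.IsBounded (V ⁻¹' {c})) (hlevne : (V ⁻¹' {c}).Nonempty)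
    (hrad : ∀ u ∈ V ⁻¹' {c}, ⟪gradient V u, p - u⟫ < 0)
    (hsub : ∀ u ∈ V ⁻¹' {c}, ∀ t ∈ Icc (0 : ℝ) T, ⟪f t u, gradient V u⟫ ≤ 0) :
    ∃ y : ℝ → EE N,
      (∀ t ∈ Icc (0 : ℝ) T, HasDerivWithinAt y (f t (y t)) (Icc (0 : ℝ) T) t) ∧
      y 0 = y T ∧ (∀ t ∈ Icc (0 : ℝ) T, V (y t) ≤ c) := by
  obtain ⟨R, hR⟩ := sublevel_bdd hN V hV p c hpc hbdd hlevne hrad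
  obtain ⟨r, hr, hr1, hr2⟩ := exists_retr V hV p c hpc hrad
  have hM : IsCompact {x | V x ≤ c} := by
    refine (isCompact_closedBall p R).of_isClosed_subset
      (isClosed_le hV.continuous continuous_const) (fun x hx => ?_)
    rw [mem_closedBall, dist_eq_norm]
    exact hR x hx
  have hex : ∀ n : ℕ, ∃ m : ℕ, n ≤ m ∧ 0 < m ∧ ∃ x : ℕ → EE N, x 0 = x m ∧ (∀ k ≤ m, V (x k) ≤ c) ∧
      ∀ k < m, x (k+1) = x k + (T/m) • (f (k * (T/m)) (x k) + (1 / ((n:ℝ) + 1)) • (p - x k)) := by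
    intro n
    refine euler_orbit V hV c T hT (fun t u => f t u + (1 / ((n:ℝ) + 1)) • (p - u)) (by fun_prop) hM
      ?_ r hr hr1 hr2 n
    intro u hu t ht
    have e : ∀ z, fderiv ℝ V u z = ⟪gradient V u, z⟫ := fun z => by simp
    rw [e, inner_add_right, inner_smul_right]
    have h1 := hrad u hu
    have h2 := hsub u hu t ht
    rw [real_inner_comm] at h2
    have h3 : (0:ℝ) < 1 / ((n:ℝ) + 1) := by positivity
    have := mul_neg_of_pos_of_neg h3 h1
    linarith
  choose m hm hm0 x hx0 hxM hxs using hex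
  exact euler_limit {x | V x ≤ c} hM T hT f hf p m hm hm0 (fun n => 1 / ((n:ℝ) + 1))
    (fun n => by positivity) (fun n => by
      rw [div_le_one (by positivity)]
      have : (0:ℝ) ≤ n := by positivity
      linarith)
    tendsto_one_div_add_atTop_nhds_zero_nat x hx0 hxM hxs

end Aux

/-- Corollary 3.2. Let `N ≥ 2`, `f : [0,T] × ℝ^N → ℝ^N` continuous,
`V : ℝ^N → ℝ` of class `C¹`, `V p < c`, with `V⁻¹(c)` bounded and nonempty,
`⟪∇V(u), p - u⟫ < 0` and `⟪f(t,u), ∇V(u)⟫ ≤ 0` on `V⁻¹(c)`. Then `ẏ = f(t,y)` has a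
`T`-periodic solution with values in the sub-level set `{V ≤ c}`. -/
theorem periodic_solution_in_star_shaped_sublevel_set
    {N : ℕ} (hN : 2 ≤ N) {T : ℝ} (hT : 0 < T)
    (f : ℝ → EuclideanSpace ℝ (Fin N) → EuclideanSpace ℝ (Fin N))
    (hf : ContinuousOn (fun p : ℝ × EuclideanSpace ℝ (Fin N) => f p.1 p.2)
      (Icc (0 : ℝ) T ×ˢ (univ : Set (EuclideanSpace ℝ (Fin N)))))
    (V : EuclideanSpace ℝ (Fin N) → ℝ) (hV : ContDiff ℝ 1 V)
    (p : EuclideanSpace ℝ (Fin N)) (c : ℝ) (hpc : V p < c)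
    (hbdd : Bornology.IsBounded (V ⁻¹' {c})) (hlevne : (V ⁻¹' {c}).Nonempty)
    (hrad : ∀ u ∈ V ⁻¹' {c}, ⟪gradient V u, p - u⟫ < 0)
    (hsub : ∀ u ∈ V ⁻¹' {c}, ∀ t ∈ Icc (0 : ℝ) T, ⟪f t u, gradient V u⟫ ≤ 0) :
    ∃ y : ℝ → EuclideanSpace ℝ (Fin N),
      (∀ t ∈ Icc (0 : ℝ) T, HasDerivWithinAt y (f t (y t)) (Icc (0 : ℝ) T) t) ∧
      y 0 = y T ∧
      (∀ t ∈ Icc (0 : ℝ) T, V (y t) ≤ c) := by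
  have hcl : ∀ t ∈ Icc (0:ℝ) T, max 0 (min t T) = t := fun t ht => by
    rw [min_eq_left ht.2, max_eq_right ht.1]
  have hf' : Continuous (fun q : ℝ × EE N => f (max 0 (min q.1 T)) q.2) := by
    have h1 : Continuous (fun q : ℝ × EE N => (max 0 (min q.1 T), q.2)) := by fun_prop
    exact hf.comp_continuous h1 (fun q => ⟨⟨le_max_left _ _, max_le hT.le (min_le_right _ _)⟩, mem_univ _⟩)
  obtain ⟨y, h1, h2, h3⟩ := main_aux hN hT (fun t u => f (max 0 (min t T)) u) hf' V hV p c hpc hbdd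
    hlevne hrad (fun u hu t ht => by simp only [hcl t ht]; exact hsub u hu t ht)
  refine ⟨y, fun t ht => ?_, h2, h3⟩
  have := h1 t ht
  simp only [hcl t ht] at this
  exact this
end

section
/- Let Ω ⊆ ℝ^N be open, G a nonempty open bounded set with M = cl(G) ⊆ Ω, and let f : [0,T] × Ω → ℝ^N be continuous and locally Lipschitz continuous in the second variable. Suppose that ⟨f(t,u), ν⟩ ≤ 0 for all t ∈ [0,T], all u ∈ ∂M, and every Bony outer normal ν to M at u. Then M is positively invariant: for every τ ∈ (0,T] and every differentiable y : [0,τ] → Ω with y'(t) = f(t, y(t)) for all t ∈ [0,τ] and y(0) ∈ M, one has y(t) ∈ M for all t ∈ [0,τ]. -/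
open Set Metric
open scoped RealInnerProductSpace NNReal

theorem bony_aux_normal {E : Type*} [NormedAddCommGroup E] [InnerProductSpace ℝ E]
    {M : Set E} {x u : E} (hu : u ∈ M) (hx : x ≠ u) (hmin : ∀ z ∈ M, ‖x - u‖ ≤ ‖x - z‖) :
    u ∈ frontier M ∧
      closedBall (u + (1 / 2 : ℝ) • (x - u)) ‖(1 / 2 : ℝ) • (x - u)‖ ∩ M = {u} := by
  have hpos : 0 < ‖x - u‖ := norm_pos_iff.2 (sub_ne_zero.2 hx)
  constructor
  · rw [frontier_eq_closure_inter_closure]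
    refine ⟨subset_closure hu, ?_⟩
    have h1 : ball x ‖x - u‖ ⊆ Mᶜ := by
      intro z hz hzM
      have := hmin z hzM
      rw [mem_ball, dist_comm, dist_eq_norm] at hz
      linarith
    apply closure_mono h1
    rw [closure_ball x hpos.ne', mem_closedBall, dist_comm, dist_eq_norm]
  · ext z
    simp only [mem_inter_iff, mem_closedBall, mem_singleton_iff]
    constructor
    · rintro ⟨h1, h2⟩
      have h3 := hmin z h2
      rw [dist_eq_norm] at h1
      have e1 : z - (u + (1 / 2 : ℝ) • (x - u)) = (z - u) - (1 / 2 : ℝ) • (x - u) := by abel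
      have e2 : x - z = (x - u) - (z - u) := by abel
      rw [e1] at h1
      rw [e2] at h3
      have h1' := pow_le_pow_left₀ (norm_nonneg _) h1 2
      have h3' := pow_le_pow_left₀ (norm_nonneg _) h3 2
      rw [norm_sub_sq_real, inner_smul_right, real_inner_comm] at h1'
      rw [norm_sub_sq_real (x - u) (z - u)] at h3'
      have : ‖z - u‖ ^ 2 ≤ 0 := by linarith
      have h0 : ‖z - u‖ = 0 := by nlinarith [norm_nonneg (z - u)]
      exact sub_eq_zero.1 (norm_eq_zero.1 h0)
    · rintro rfl
      refine ⟨?_, hu⟩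
      rw [dist_eq_norm]
      simp [norm_neg]

/-- Bony. Let `M = cl G ⊆ Ω` with `G` nonempty open bounded, and let
`f` be continuous and locally Lipschitz in the second variable. If `⟪f(t,u), ν⟫ ≤ 0`
for every Bony outer normal `ν` to `M` at every `u ∈ ∂M`, then `M` is positively
invariant for `ẏ = f(t,y)`. -/
theorem bony_positive_invariance
    {N : ℕ} {T : ℝ} (hT : 0 < T)
    (Ω : Set (EuclideanSpace ℝ (Fin N))) (hΩ : IsOpen Ω)
    (G : Set (EuclideanSpace ℝ (Fin N)))
    (hne : G.Nonempty) (hG : IsOpen G) (hGb : Bornology.IsBounded G)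
    (hMΩ : closure G ⊆ Ω)
    (f : ℝ → EuclideanSpace ℝ (Fin N) → EuclideanSpace ℝ (Fin N))
    (hf : ContinuousOn (fun p : ℝ × EuclideanSpace ℝ (Fin N) => f p.1 p.2)
      (Icc (0 : ℝ) T ×ˢ Ω))
    (hlip : ∀ x₀ ∈ Ω, ∃ ε > (0 : ℝ), ∃ K : ℝ≥0, ∀ t ∈ Icc (0 : ℝ) T,
      LipschitzOnWith K (f t) (ball x₀ ε ∩ Ω))
    (hbony : ∀ t ∈ Icc (0 : ℝ) T, ∀ u ∈ frontier (closure G),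
      ∀ ν : EuclideanSpace ℝ (Fin N), ν ≠ 0 →
        closedBall (u + ν) ‖ν‖ ∩ closure G = {u} → ⟪f t u, ν⟫ ≤ 0) :
    ∀ τ ∈ Ioc (0 : ℝ) T, ∀ y : ℝ → EuclideanSpace ℝ (Fin N),
      (∀ t ∈ Icc (0 : ℝ) τ, y t ∈ Ω) →
      (∀ t ∈ Icc (0 : ℝ) τ, HasDerivWithinAt y (f t (y t)) (Icc (0 : ℝ) τ) t) →
      y 0 ∈ closure G → ∀ t ∈ Icc (0 : ℝ) τ, y t ∈ closure G := by
  intro τ hτ y hyΩ hy hy0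
  have hycont : ContinuousOn y (Icc 0 τ) := fun t ht => (hy t ht).continuousWithinAt
  have hMne : (closure G).Nonempty := hne.closure
  have hMc : IsClosed (closure G) := isClosed_closure
  have hclosed : IsClosed (y ⁻¹' closure G ∩ Icc 0 τ) := by
    rw [inter_comm]
    exact hycont.preimage_isClosed_of_isClosed isClosed_Icc hMc
  refine hclosed.Icc_subset_of_forall_exists_gt hy0 ?_
  rintro s ⟨hsM, hs0, hsτ⟩ w hw
  have hsM' : y s ∈ closure G := hsM
  obtain ⟨ε, hε, K, hK⟩ := hlip (y s) (hMΩ hsM')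
  have hcs := hycont s ⟨hs0, hsτ.le⟩
  obtain ⟨δ, hδ, hδb⟩ := Metric.continuousWithinAt_iff.1 hcs (ε / 2) (by positivity)
  -- the right end
  let b := min (min w τ) (s + δ / 2)
  have hw' : s < w := hw
  have hsb : s < b := by simp only [b, lt_min_iff]; exact ⟨⟨hw', hsτ⟩, by linarith⟩
  have hbw : b ≤ w := (min_le_left _ _).trans (min_le_left _ _)
  have hbτ : b ≤ τ := (min_le_left _ _).trans (min_le_right _ _)
  have hbδ : b ≤ s + δ / 2 := min_le_right _ _
  have hball : ∀ t ∈ Icc s b, dist (y t) (y s) < ε / 2 := by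
    intro t ht
    apply hδb ⟨hs0.trans ht.1, ht.2.trans hbτ⟩
    rw [Real.dist_eq, abs_of_nonneg (by linarith [ht.1])]
    linarith [ht.2]
  refine ⟨b, ?_, hsb, hbw⟩
  let φ : ℝ → ℝ := fun t => infDist (y t) (closure G) ^ 2
  have hφc : ContinuousOn φ (Icc s b) := by
    have : ContinuousOn y (Icc s b) := hycont.mono (Icc_subset_Icc hs0 hbτ)
    exact ((continuous_infDist_pt _).comp_continuousOn this).pow 2
  have hgr := le_gronwallBound_of_liminf_deriv_right_le (f := φ)
    (f' := fun t => 2 * (K : ℝ) * φ t) (δ := 0) (K := 2 * (K : ℝ)) (ε := 0) hφc ?_ ?_ ?_ b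
    (right_mem_Icc.2 hsb.le)
  · rw [gronwallBound_ε0] at hgr
    have h0 : infDist (y b) (closure G) ^ 2 ≤ 0 := hgr.trans (by simp)
    have h1 : infDist (y b) (closure G) = 0 := by
      have := infDist_nonneg (x := y b) (s := closure G)
      nlinarith
    exact (hMc.mem_iff_infDist_zero hMne).2 h1
  · intro t ht r hr
    apply Filter.Eventually.frequently
    have htτ : t ∈ Icc 0 τ := ⟨hs0.trans ht.1, ht.2.le.trans hbτ⟩
    have htT : t ∈ Icc 0 T := ⟨htτ.1, htτ.2.trans hτ.2⟩
    obtain ⟨u, huM, hu⟩ := hMc.exists_infDist_eq_dist hMne (y t)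
    have hmin : ∀ z ∈ closure G, ‖y t - u‖ ≤ ‖y t - z‖ := by
      intro z hz
      rw [← dist_eq_norm, ← dist_eq_norm, ← hu]
      exact infDist_le_dist_of_mem hz
    have hb1 := hball t ⟨ht.1, ht.2.le⟩
    have hy_ball : y t ∈ ball (y s) ε ∩ Ω := ⟨by rw [mem_ball]; linarith, hyΩ t htτ⟩
    have hu_ball : u ∈ ball (y s) ε ∩ Ω := by
      refine ⟨?_, hMΩ huM⟩
      have h1 := hmin _ hsM'
      rw [← dist_eq_norm, ← dist_eq_norm] at h1
      have h2 := dist_triangle u (y t) (y s)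
      rw [dist_comm u (y t)] at h2
      rw [mem_ball]; linarith
    have hL : ‖f t (y t) - f t u‖ ≤ K * ‖y t - u‖ := by
      have := (hK t htT).dist_le_mul _ hy_ball _ hu_ball
      rwa [dist_eq_norm, dist_eq_norm] at this
    have hin : ⟪f t u, y t - u⟫ ≤ 0 := by
      by_cases hxu : y t = u
      · simp [hxu]
      · obtain ⟨hfr, hnb⟩ := bony_aux_normal huM hxu hmin
        have := hbony t htT u hfr _ (smul_ne_zero (by norm_num) (sub_ne_zero.2 hxu)) hnb
        rw [inner_smul_right] at this
        linarith
    have hφt : φ t = ‖y t - u‖ ^ 2 := by simp only [φ, hu, dist_eq_norm]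
    have hder : 2 * ⟪y t - u, f t (y t)⟫ < r := by
      have e : ⟪y t - u, f t (y t)⟫ = ⟪f t (y t) - f t u, y t - u⟫ + ⟪f t u, y t - u⟫ := by
        rw [real_inner_comm, ← inner_add_left]; simp
      have h1 := real_inner_le_norm (f t (y t) - f t u) (y t - u)
      have h2 := mul_le_mul_of_nonneg_right hL (norm_nonneg (y t - u))
      rw [hφt] at hr
      nlinarith
    have hd : HasDerivWithinAt (fun z => ‖y z - u‖ ^ 2) (2 * ⟪y t - u, f t (y t)⟫) (Ioi t) t := by
      have h1 : HasDerivWithinAt y (f t (y t)) (Ioi t) t :=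
        (hy t htτ).mono_of_mem_nhdsWithin
          (Icc_mem_nhdsGT_of_mem ⟨htτ.1, ht.2.trans_le hbτ⟩)
      exact (h1.sub_const u).norm_sq
    have hlim := hasDerivWithinAt_iff_tendsto_slope' (by simp) |>.1 hd
    filter_upwards [hlim.eventually (gt_mem_nhds hder), self_mem_nhdsWithin] with z hz hzt
    have hzt' : t < z := hzt
    refine lt_of_le_of_lt ?_ hz
    rw [slope_def_field, div_eq_inv_mul]
    apply mul_le_mul_of_nonneg_left _ (inv_nonneg.2 (by linarith))
    rw [hφt]
    have := infDist_le_dist_of_mem (x := y z) huM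
    rw [dist_eq_norm] at this
    have := pow_le_pow_left₀ infDist_nonneg this 2
    simp only [φ]; linarith
  · simp only [φ]
    rw [infDist_zero_of_mem hsM']; simp
  · intro t _; simp
end
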